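/- arXiv:alg-geom/9403014 — 3 statements merged into one kernel-verified Lean document; each statement's English description precedes it below -/
import Mathlib

section
/- Let E and F be θ-stable representations of the quiver Q over k (so in particular Σ_{i∈Q₀} θ_i dim_k E_i = 0 = Σ_{i∈Q₀} θ_i dim_k F_i). Then every nonzero morphism of representations f : E → F is an isomorphism, i.e., each component f_i : E_i → F_i is bijective. -/
/-- If `E` and `F` are θ-stable representations of a quiver `Q`
(with finite vertex set `Q0`, finite arrow set `Q1`, tail map `t` and head map `h`)
over a field `k`, then every nonzero morphism of representations `f : E → F`
is an isomorphism, i.e. each component `f i` is bijective. -/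
theorem nonzero_hom_between_stable_reps_is_iso
    {k : Type*} [Field k] {Q0 Q1 : Type*} [Fintype Q0] [Fintype Q1]
    (t h : Q1 → Q0) (θ : Q0 → ℝ)
    (E : Q0 → Type*) [∀ i, AddCommGroup (E i)] [∀ i, Module k (E i)]
    [∀ i, FiniteDimensional k (E i)]
    (F : Q0 → Type*) [∀ i, AddCommGroup (F i)] [∀ i, Module k (F i)]
    [∀ i, FiniteDimensional k (F i)]
    (φ : ∀ a : Q1, E (t a) →ₗ[k] E (h a))
    (ψ : ∀ a : Q1, F (t a) →ₗ[k] F (h a))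
    (hEsum : ∑ i : Q0, θ i * (Module.finrank k (E i) : ℝ) = 0)
    (hFsum : ∑ i : Q0, θ i * (Module.finrank k (F i) : ℝ) = 0)
    (hEstable : ∀ E' : ∀ i : Q0, Submodule k (E i),
      (∀ a : Q1, (E' (t a)).map (φ a) ≤ E' (h a)) →
      E' ≠ (fun _ => ⊥) → E' ≠ (fun _ => ⊤) →
      0 < ∑ i : Q0, θ i * (Module.finrank k (E' i) : ℝ))
    (hFstable : ∀ F' : ∀ i : Q0, Submodule k (F i),
      (∀ a : Q1, (F' (t a)).map (ψ a) ≤ F' (h a)) →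
      F' ≠ (fun _ => ⊥) → F' ≠ (fun _ => ⊤) →
      0 < ∑ i : Q0, θ i * (Module.finrank k (F' i) : ℝ))
    (f : ∀ i : Q0, E i →ₗ[k] F i)
    (hf : ∀ a : Q1, (f (h a)).comp (φ a) = (ψ a).comp (f (t a)))
    (hfne : f ≠ 0) :
    ∀ i : Q0, Function.Bijective (f i) := by
  have hK : ∀ a : Q1, (LinearMap.ker (f (t a))).map (φ a) ≤ LinearMap.ker (f (h a)) := by
    rintro a _ ⟨x, hx, rfl⟩
    have hx' : f (t a) x = 0 := hx
    have e := LinearMap.congr_fun (hf a) x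
    simp only [LinearMap.comp_apply, hx', map_zero] at e
    exact e
  have hR : ∀ a : Q1,
      (LinearMap.range (f (t a))).map (ψ a) ≤ LinearMap.range (f (h a)) := by
    rintro a _ ⟨_, ⟨x, rfl⟩, rfl⟩
    exact ⟨φ a x, LinearMap.congr_fun (hf a) x⟩
  have hKt : (fun i => LinearMap.ker (f i)) ≠ (fun _ => ⊤) := fun e =>
    hfne (funext fun i => LinearMap.ker_eq_top.mp (congrFun e i))
  have hRb : (fun i => LinearMap.range (f i)) ≠ (fun _ => ⊥) := fun e =>
    hfne (funext fun i => LinearMap.range_eq_bot.mp (congrFun e i))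
  have hsum : ∑ i : Q0, θ i * (Module.finrank k (LinearMap.range (f i)) : ℝ)
      + ∑ i : Q0, θ i * (Module.finrank k (LinearMap.ker (f i)) : ℝ) = 0 := by
    rw [← hEsum, ← Finset.sum_add_distrib]
    refine Finset.sum_congr rfl fun i _ => ?_
    rw [← (f i).finrank_range_add_finrank_ker]
    push_cast
    ring
  have hRnn : 0 ≤ ∑ i : Q0, θ i * (Module.finrank k (LinearMap.range (f i)) : ℝ) := by
    by_cases e : (fun i => LinearMap.range (f i)) = (fun _ => ⊤)
    · have e' : ∀ i, LinearMap.range (f i) = ⊤ := congrFun e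
      refine (hFsum.symm.trans (Finset.sum_congr rfl fun i _ => ?_)).le
      rw [e' i, finrank_top]
    · exact (hFstable _ hR hRb e).le
  have hKb : (fun i => LinearMap.ker (f i)) = (fun _ => ⊥) := by
    by_contra e
    have := hEstable _ hK e hKt
    linarith
  have hKb' : ∀ i, LinearMap.ker (f i) = ⊥ := congrFun hKb
  have hRt : (fun i => LinearMap.range (f i)) = (fun _ => ⊤) := by
    by_contra e
    have h1 := hFstable _ hR hRb e
    have h2 : ∑ i : Q0, θ i * (Module.finrank k (LinearMap.ker (f i)) : ℝ) = 0 := by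
      refine Finset.sum_eq_zero fun i _ => ?_
      rw [hKb' i, finrank_bot, Nat.cast_zero, mul_zero]
    linarith
  exact fun i => ⟨LinearMap.ker_eq_bot.mp (hKb' i), LinearMap.range_eq_top.mp (congrFun hRt i)⟩
end

section
/- Assume k is algebraically closed. Let E be a θ-stable representation of the quiver Q over k. Then every endomorphism of representations f : E → E is a homothety: there exists a scalar c ∈ k such that f_i = c · id_{E_i} for every vertex i ∈ Q₀. In particular the endomorphism algebra of E is isomorphic to k. -/
/-- Over an algebraically closed field `k`, every endomorphism of a
θ-stable representation `E` of a quiver `Q` is a homothety: there is `c : k` with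
`f i = c • id` at every vertex `i`. In particular `End(E) ≅ k`. -/
theorem endomorphism_of_stable_rep_is_homothety
    {k : Type*} [Field k] [IsAlgClosed k] {Q0 Q1 : Type*} [Fintype Q0] [Fintype Q1]
    (t h : Q1 → Q0) (θ : Q0 → ℝ)
    (E : Q0 → Type*) [∀ i, AddCommGroup (E i)] [∀ i, Module k (E i)]
    [∀ i, FiniteDimensional k (E i)]
    (φ : ∀ a : Q1, E (t a) →ₗ[k] E (h a))
    (hEsum : ∑ i : Q0, θ i * (Module.finrank k (E i) : ℝ) = 0)
    (hEstable : ∀ E' : ∀ i : Q0, Submodule k (E i),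
      (∀ a : Q1, (E' (t a)).map (φ a) ≤ E' (h a)) →
      E' ≠ (fun _ => ⊥) → E' ≠ (fun _ => ⊤) →
      0 < ∑ i : Q0, θ i * (Module.finrank k (E' i) : ℝ))
    (f : ∀ i : Q0, E i →ₗ[k] E i)
    (hf : ∀ a : Q1, (f (h a)).comp (φ a) = (φ a).comp (f (t a))) :
    ∃ c : k, ∀ i : Q0, f i = c • LinearMap.id := by
  classical
  by_cases hE : ∀ i, Subsingleton (E i)
  · refine ⟨0, fun i => ?_⟩
    have := hE i
    ext x
    exact Subsingleton.elim _ _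
  push Not at hE
  obtain ⟨i0, hi0⟩ := hE
  have : Nontrivial (E i0) := by
    first
      | exact hi0
      | exact not_subsingleton_iff_nontrivial.mp hi0
  obtain ⟨c, hc⟩ := Module.End.exists_eigenvalue (f i0)
  obtain ⟨v, hv⟩ := hc.exists_hasEigenvector
  have hfv : f i0 v = c • v := hv.apply_eq_smul
  have hv0 : v ≠ 0 := hv.2
  refine ⟨c, ?_⟩
  -- the endomorphism `g = f - c`
  let g : ∀ i : Q0, E i →ₗ[k] E i := fun i => f i - c • LinearMap.id
  have hg : ∀ (a : Q1) (x : E (t a)), g (h a) (φ a x) = φ a (g (t a) x) := by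
    intro a x
    have h1 : f (h a) (φ a x) = φ a (f (t a) x) := LinearMap.congr_fun (hf a) x
    simp [g, h1]
  have hgv : g i0 v = 0 := by simp [g, hfv]
  by_contra hne
  have hg0 : ¬ ∀ i, g i = 0 := fun hall => hne fun i => sub_eq_zero.mp (hall i)
  have hker := hEstable (fun i => LinearMap.ker (g i))
    (by
      rintro a _ ⟨x, hx, rfl⟩
      have hx' : g (t a) x = 0 := hx
      change g (h a) (φ a x) = 0
      rw [hg, hx', map_zero])
    (by
      intro heq
      have h1 : LinearMap.ker (g i0) = ⊥ := congrFun heq i0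
      exact hv0 (LinearMap.ker_eq_bot'.mp h1 v hgv))
    (by
      intro heq
      exact hg0 fun i => LinearMap.ker_eq_top.mp (congrFun heq i))
  have hrange := hEstable (fun i => LinearMap.range (g i))
    (by
      rintro a _ ⟨_, ⟨x, rfl⟩, rfl⟩
      exact ⟨φ a x, hg a x⟩)
    (by
      intro heq
      exact hg0 fun i => LinearMap.range_eq_bot.mp (congrFun heq i))
    (by
      intro heq
      have h1 : LinearMap.range (g i0) = ⊤ := congrFun heq i0
      have h2 : LinearMap.ker (g i0) = ⊥ := LinearMap.ker_eq_bot_iff_range_eq_top.mpr h1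
      exact hv0 (LinearMap.ker_eq_bot'.mp h2 v hgv))
  have hsum : ∑ i : Q0, θ i * (Module.finrank k (LinearMap.range (g i)) : ℝ)
      + ∑ i : Q0, θ i * (Module.finrank k (LinearMap.ker (g i)) : ℝ) = 0 := by
    rw [← Finset.sum_add_distrib, ← hEsum]
    refine Finset.sum_congr rfl fun i _ => ?_
    rw [← mul_add, ← LinearMap.finrank_range_add_finrank_ker (g i)]
    push_cast
    rfl
  linarith
end

section
/- Let Q be a quiver with finitely many vertices and finitely many arrows, k a field, and W = (W_i, φ_a) a representation of Q over k. Then for every vertex j ∈ Q₀ the sequence of k-linear maps 0 → ⊕_{a∈Q₁} k⟨Path(h(a), j)⟩ ⊗_k W_{t(a)} →^d ⊕_{i∈Q₀} k⟨Path(i, j)⟩ ⊗_k W_i →^μ W_j → 0 is exact, where μ(p ⊗ w) = φ_p(w), and where for an arrow a, a path p from h(a) to j, and w ∈ W_{t(a)}, d(p ⊗ w) = (p∘a) ⊗ w − p ⊗ φ_a(w), with p∘a denoting the path from t(a) to j obtained by first traversing a and then p. (This is the fiberwise form of the universal projective resolution of the universal representation, obtained from the standard projective bimodule resolution of the path algebra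 kQ.) -/
open scoped TensorProduct

/-- The composite linear map `φ_p : W i →ₗ[k] W j` attached to a path `p` from `i`
to `j` in a quiver, built from the structure maps `φ` of a representation `W`;
the empty path gives the identity. -/
def pathMap {k : Type*} [Field k] {V : Type*} [Quiver V]
    (W : V → Type*) [∀ i, AddCommGroup (W i)] [∀ i, Module k (W i)]
    (φ : ∀ ⦃i j : V⦄, (i ⟶ j) → (W i →ₗ[k] W j)) :
    ∀ {i j : V}, Quiver.Path i j → (W i →ₗ[k] W j)
  | _, _, Quiver.Path.nil => LinearMap.id
  | _, _, Quiver.Path.cons p a => (φ a).comp (pathMap W φ p)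

theorem group_cancel {A : Type*} [AddCommGroup A] {a b c : A} (h : a + b = c + b) : a = c :=
  add_right_cancel h

theorem pi_tensor_ext {k : Type*} [Field k] {ι : Type*} [Fintype ι] [DecidableEq ι]
    {P : ι → Type*} {W : ι → Type*} [∀ i, AddCommGroup (W i)] [∀ i, Module k (W i)]
    {M : Type*} [AddCommMonoid M] [Module k M]
    {f g : (∀ i, (P i →₀ k) ⊗[k] W i) →ₗ[k] M}
    (h : ∀ i (p : P i) (w : W i), f (Pi.single i (Finsupp.single p (1 : k) ⊗ₜ[k] w)) =
      g (Pi.single i (Finsupp.single p (1 : k) ⊗ₜ[k] w))) : f = g := by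
  apply LinearMap.pi_ext'
  intro i
  apply TensorProduct.ext
  apply Finsupp.lhom_ext'
  intro p
  apply LinearMap.ext_ring
  ext w
  exact h i p w

section
variable {k : Type*} [Field k] {V : Type*} [Quiver V]
    (W : V → Type*) [∀ i, AddCommGroup (W i)] [∀ i, Module k (W i)]
    (φ : ∀ ⦃i j : V⦄, (i ⟶ j) → (W i →ₗ[k] W j))

theorem pathMap_toPath_comp {i l j : V} (a : i ⟶ l) (p : Quiver.Path l j) :
    pathMap W φ ((Quiver.Hom.toPath a).comp p) = (pathMap W φ p).comp (φ a) := by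
  induction p with
  | nil =>
    change pathMap W φ (Quiver.Path.cons Quiver.Path.nil a) = _
    simp only [pathMap, LinearMap.id_comp, LinearMap.comp_id]
  | cons p b ih => simp only [Quiver.Path.comp_cons, pathMap, ih, LinearMap.comp_assoc]

variable [DecidableEq V] [∀ i j : V, DecidableEq (i ⟶ j)] (j : V)

/-- The inclusion `w ↦ q ⊗ w` into the summand of the arrow `b`. -/
noncomputable def arrIn {l m : V} (b : l ⟶ m) (q : Quiver.Path m j) :
    W l →ₗ[k] (∀ s : Σ i' j' : V, i' ⟶ j', (Quiver.Path s.2.1 j →₀ k) ⊗[k] W s.1) :=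
  (LinearMap.single k (fun s : Σ i' j' : V, i' ⟶ j' =>
    (Quiver.Path s.2.1 j →₀ k) ⊗[k] W s.1) ⟨l, m, b⟩) ∘ₗ
    (TensorProduct.mk k (Quiver.Path m j →₀ k) (W l) (Finsupp.single q (1 : k)))

theorem arrIn_apply {l m : V} (b : l ⟶ m) (q : Quiver.Path m j) (w : W l) :
    arrIn (k := k) W j b q w = Pi.single (⟨l, m, b⟩ : Σ i' j' : V, i' ⟶ j')
          (Finsupp.single q (1 : k) ⊗ₜ[k] w) := rfl

/-- The contracting homotopy on basis paths, splitting off the arrows of `p`. -/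
noncomputable def contrAux : ∀ {i l : V}, Quiver.Path i l → Quiver.Path l j →
    (W i →ₗ[k] (∀ s : Σ i' j' : V, i' ⟶ j', (Quiver.Path s.2.1 j →₀ k) ⊗[k] W s.1))
  | _, _, Quiver.Path.nil, _ => 0
  | _, _, Quiver.Path.cons p b, q =>
      contrAux p ((Quiver.Hom.toPath b).comp q) + (arrIn W j b q) ∘ₗ (pathMap W φ p)

theorem contrAux_toPath_comp {i l m : V} (a : i ⟶ l) (p : Quiver.Path l m)
    (q : Quiver.Path m j) :
    contrAux (k := k) W φ j ((Quiver.Hom.toPath a).comp p) q =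
      arrIn W j a (p.comp q) + (contrAux W φ j p q) ∘ₗ (φ a) := by
  induction p with
  | nil =>
    change contrAux W φ j (Quiver.Path.cons Quiver.Path.nil a) q = _
    simp [contrAux, pathMap]
  | cons p b ih =>
    simp only [Quiver.Path.comp_cons, contrAux, ih, pathMap_toPath_comp, LinearMap.add_comp,
      LinearMap.comp_assoc, ← add_assoc]
    rw [← Quiver.Path.comp_assoc]
    rfl

/-- The contracting homotopy. -/
noncomputable def contr [Fintype V] : (∀ i : V, (Quiver.Path i j →₀ k) ⊗[k] W i) →ₗ[k]
    (∀ s : Σ i' j' : V, i' ⟶ j', (Quiver.Path s.2.1 j →₀ k) ⊗[k] W s.1) :=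
  LinearMap.lsum k (fun i : V => (Quiver.Path i j →₀ k) ⊗[k] W i) k (fun i =>
    TensorProduct.lift (Finsupp.linearCombination k
      (fun p : Quiver.Path i j => contrAux W φ j p Quiver.Path.nil)))

theorem contr_single [Fintype V] (i : V) (p : Quiver.Path i j) (w : W i) :
    contr W φ j (Pi.single i (Finsupp.single p (1 : k) ⊗ₜ[k] w)) =
      contrAux W φ j p Quiver.Path.nil w := by
  unfold contr
  rw [LinearMap.lsum_piSingle]
  simp
end

/-- For a quiver `Q` with finitely many vertices and arrows, a field
`k`, a representation `W = (W i, φ a)` of `Q` over `k`, and a vertex `j`, the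
sequence
`0 → ⊕_{a∈Q₁} k⟨Path(h a, j)⟩ ⊗ W (t a) →^d ⊕_{i∈Q₀} k⟨Path(i, j)⟩ ⊗ W i →^μ W j → 0`
is exact, where `μ (p ⊗ w) = φ_p w` and
`d (p ⊗ w) = (p ∘ a) ⊗ w − p ⊗ φ_a w` for an arrow `a` and a path `p` starting at
the head of `a`.  Here `k⟨Path(i,j)⟩ = Quiver.Path i j →₀ k` is the vector space
with basis the paths from `i` to `j`, the direct sums are realized as (finite)
products, and the arrows are indexed by the sigma type `Σ i' j' : V, i' ⟶ j'`. -/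
theorem standard_resolution_of_quiver_rep_exact
    {k : Type*} [Field k] {V : Type*} [Quiver V]
    [Fintype V] [DecidableEq V]
    [∀ i j : V, Fintype (i ⟶ j)] [∀ i j : V, DecidableEq (i ⟶ j)]
    (W : V → Type*) [∀ i, AddCommGroup (W i)] [∀ i, Module k (W i)]
    (φ : ∀ ⦃i j : V⦄, (i ⟶ j) → (W i →ₗ[k] W j)) (j : V)
    (μ : (∀ i : V, (Quiver.Path i j →₀ k) ⊗[k] W i) →ₗ[k] W j)
    (hμ : ∀ (i : V) (p : Quiver.Path i j) (w : W i),
      μ (Pi.single i (Finsupp.single p (1 : k) ⊗ₜ[k] w)) = pathMap W φ p w)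
    (d : (∀ s : Σ i' j' : V, i' ⟶ j',
            (Quiver.Path s.2.1 j →₀ k) ⊗[k] W s.1) →ₗ[k]
         (∀ i : V, (Quiver.Path i j →₀ k) ⊗[k] W i))
    (hd : ∀ (i' j' : V) (a : i' ⟶ j') (p : Quiver.Path j' j) (w : W i'),
      d (Pi.single (⟨i', j', a⟩ : Σ i' j' : V, i' ⟶ j')
          (Finsupp.single p (1 : k) ⊗ₜ[k] w)) =
        Pi.single i' (Finsupp.single ((Quiver.Hom.toPath a).comp p) (1 : k) ⊗ₜ[k] w)
          - Pi.single j' (Finsupp.single p (1 : k) ⊗ₜ[k] (φ a w))) :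
    Function.Injective d ∧ LinearMap.range d = LinearMap.ker μ ∧
      Function.Surjective μ := by
  have hd' : ∀ (i' j' : V) (a : i' ⟶ j') (p : Quiver.Path j' j) (w : W i'),
      d (Pi.single (⟨i', j', a⟩ : Σ i' j' : V, i' ⟶ j')
          (Finsupp.single p (1 : k) ⊗ₜ[k] w)) +
          Pi.single j' (Finsupp.single p (1 : k) ⊗ₜ[k] (φ a w)) =
        Pi.single i' (Finsupp.single ((Quiver.Hom.toPath a).comp p) (1 : k) ⊗ₜ[k] w) := by
    intro i' j' a p w
    rw [hd]
    funext i
    exact sub_add_cancel (G := (Quiver.Path i j →₀ k) ⊗[k] W i) _ _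
  have hμd : ∀ x, μ (d x) = 0 := by
    intro x
    refine LinearMap.congr_fun (f := μ ∘ₗ d) (g := 0) ?_ x
    apply pi_tensor_ext
    rintro ⟨i', j', a⟩ p w
    have := congrArg μ (hd' i' j' a p w)
    rw [map_add, hμ, hμ, pathMap_toPath_comp] at this
    exact add_eq_right.mp this
  have hinj : ∀ x, contr W φ j (d x) = x := by
    intro x
    refine LinearMap.congr_fun (f := contr W φ j ∘ₗ d) (g := LinearMap.id) ?_ x
    apply pi_tensor_ext
    rintro ⟨i', j', a⟩ p w
    have := congrArg (contr W φ j) (hd' i' j' a p w)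
    rw [map_add, contr_single, contr_single, contrAux_toPath_comp, Quiver.Path.comp_nil] at this
    funext s
    exact group_cancel (A := (Quiver.Path s.2.1 j →₀ k) ⊗[k] W s.1) (congrFun this s)
  have hdG : ∀ (i l : V) (p : Quiver.Path i l) (q : Quiver.Path l j) (w : W i),
      d (contrAux W φ j p q w) +
          Pi.single l (Finsupp.single q (1 : k) ⊗ₜ[k] (pathMap W φ p w)) =
        Pi.single i (Finsupp.single (p.comp q) (1 : k) ⊗ₜ[k] w) := by
    intro i l p
    induction p with
    | nil => intro q w; simp [contrAux, pathMap]
    | cons p b ih =>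
      intro q w
      have h1 := hd' _ _ b q (pathMap W φ p w)
      have h2 := ih ((Quiver.Hom.toPath b).comp q) w
      rw [← h1, ← Quiver.Path.comp_assoc] at h2
      simp only [contrAux, LinearMap.add_apply, map_add, LinearMap.comp_apply, arrIn_apply,
        pathMap]
      rw [add_assoc]
      exact h2
  have hdh : ∀ x, d (contr W φ j x) +
      Pi.single j (Finsupp.single Quiver.Path.nil (1 : k) ⊗ₜ[k] (μ x)) = x := by
    intro x
    refine LinearMap.congr_fun (f := d ∘ₗ contr W φ j +
      (LinearMap.single k (fun i : V => (Quiver.Path i j →₀ k) ⊗[k] W i) j) ∘ₗ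
      (TensorProduct.mk k _ _ (Finsupp.single Quiver.Path.nil (1 : k))) ∘ₗ μ)
      (g := LinearMap.id) ?_ x
    apply pi_tensor_ext
    intro i p w
    simp only [LinearMap.comp_apply, LinearMap.add_apply, LinearMap.id_apply,
      TensorProduct.mk_apply, LinearMap.coe_single]
    rw [contr_single, hμ, hdG, Quiver.Path.comp_nil]
  refine ⟨Function.LeftInverse.injective hinj, ?_, ?_⟩
  · apply le_antisymm
    · rintro _ ⟨x, rfl⟩
      exact hμd x
    · intro x hx
      refine ⟨contr W φ j x, ?_⟩
      have := hdh x
      rw [LinearMap.mem_ker.mp hx, TensorProduct.tmul_zero, Pi.single_zero, add_zero] at this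
      exact this
  · intro w
    exact ⟨_, (hμ j Quiver.Path.nil w).trans (by simp only [pathMap, LinearMap.id_apply])⟩
end
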